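/- Let A be an N×N Jacobi matrix with eigenvalues λ_k, normalized eigenvectors φ_k ((φ_k)_1 = 1) and ρ_k = ⟨φ_k, φ_k⟩, and let r(t) = Σ_{k=1}^N (1/ρ_k) S(t, λ_k) be its response function. Then for every integer n ≥ 0 one has (A^n)_{11} = Σ_{k=1}^N λ_k^n / ρ_k, and r is real-analytic on ℝ with r^{(2n)}(0) = 0 and r^{(2n+1)}(0) = (−1)^n (A^n)_{11} for all n ≥ 0; in particular r'(0) = 1, r'''(0) = −b_1 and r^{(5)}(0) = b_1² + a_1². -/

import Mathlib

open MeasureTheory Real Matrix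

/-- `S t λ` solves `S'' = -λ S`, `S 0 = 0`, `S' 0 = 1`. -/
noncomputable def S (t lam : ℝ) : ℝ :=
  if 0 < lam then Real.sin (Real.sqrt lam * t) / Real.sqrt lam
  else if lam < 0 then Real.sinh (Real.sqrt (-lam) * t) / Real.sqrt (-lam)
  else t

/-- An `N × N` Jacobi matrix: real symmetric tridiagonal with positive off-diagonal entries. -/
def IsJacobi {N : ℕ} (A : Matrix (Fin N) (Fin N) ℝ) : Prop :=
  (∀ i j, A i j = A j i) ∧
  (∀ i j : Fin N, (i : ℕ) + 1 < (j : ℕ) → A i j = 0) ∧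
  (∀ i j : Fin N, (i : ℕ) + 1 = (j : ℕ) → 0 < A i j)

/-!
Eigenvectors of a symmetric matrix for distinct eigenvalues are orthogonal, so
`A ^ n = ∑ k, (λ_k ^ n / ρ_k) φ_k φ_kᵀ`, and the corner entry of this identity is the moment
formula because `φ_k` has first component `1`. On the other side, `S'' = -λ S`, `S(0) = 0` and
`S'(0) = 1` give `S^{(2n)}(0) = 0` and `S^{(2n+1)}(0) = (-λ)^n`, so the odd derivatives of the
response function at `0` are, up to sign, the same moments.
-/

section SpectralDecomposition

variable {ι R K : Type*} [Fintype ι]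

lemma dotProduct_eq_zero_of_mulVec_eq_smul [CommRing R] [IsDomain R] {A : Matrix ι ι R}
    (hA : A.IsSymm) {u v : ι → R} {μ ν : R} (hu : A *ᵥ u = μ • u) (hv : A *ᵥ v = ν • v)
    (hμν : μ ≠ ν) : u ⬝ᵥ v = 0 := by
  have hself_adjoint : μ * (u ⬝ᵥ v) = ν * (u ⬝ᵥ v) :=
    calc μ * (u ⬝ᵥ v) = A *ᵥ u ⬝ᵥ v := by rw [hu, smul_dotProduct, smul_eq_mul]
      _ = u ⬝ᵥ A *ᵥ v := by rw [dotProduct_mulVec, ← mulVec_transpose, hA.eq]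
      _ = ν * (u ⬝ᵥ v) := by rw [hv, dotProduct_smul, smul_eq_mul]
  by_contra h
  exact hμν (mul_right_cancel₀ h hself_adjoint)

lemma pow_mulVec_of_mulVec_eq_smul [CommSemiring R] [DecidableEq ι] {A : Matrix ι ι R}
    {v : ι → R} {μ : R} (hv : A *ᵥ v = μ • v) (n : ℕ) : (A ^ n) *ᵥ v = μ ^ n • v := by
  induction n with
  | zero => simp
  | succ n ih => rw [pow_succ, ← mulVec_mulVec, hv, mulVec_smul, ih, smul_smul, pow_succ']

variable [Field K] [DecidableEq ι]

lemma sum_inv_smul_vecMulVec_eq_one {φ : ι → ι → K} (horth : Pairwise fun k l => φ k ⬝ᵥ φ l = 0)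
    (hne : ∀ k, φ k ⬝ᵥ φ k ≠ 0) :
    ∑ k, (φ k ⬝ᵥ φ k)⁻¹ • vecMulVec (φ k) (φ k) = 1 := by
  have hright : of φ * of (fun i k => φ k i * (φ k ⬝ᵥ φ k)⁻¹) = 1 := by
    ext k l
    have hentry : (of φ * of fun i k => φ k i * (φ k ⬝ᵥ φ k)⁻¹) k l =
        (φ k ⬝ᵥ φ l) * (φ l ⬝ᵥ φ l)⁻¹ := by
      simp only [mul_apply, of_apply, dotProduct, Finset.sum_mul, mul_assoc]
    rw [hentry]
    obtain rfl | hkl := eq_or_ne k l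
    · rw [mul_inv_cancel₀ (hne k), one_apply_eq]
    · rw [horth hkl, zero_mul, one_apply_ne hkl]
  -- A right inverse of a square matrix is a left inverse: orthogonality becomes completeness.
  rw [← mul_eq_one_comm.mp hright]
  ext i j
  simp only [Matrix.sum_apply, Matrix.smul_apply, vecMulVec_apply, smul_eq_mul, mul_apply, of_apply]
  exact Finset.sum_congr rfl fun k _ => by ring

lemma pow_eq_sum_smul_vecMulVec {A : Matrix ι ι K} (hA : A.IsSymm) {lam : ι → K}
    {φ : ι → ι → K} (hlam : Function.Injective lam) (heig : ∀ k, A *ᵥ φ k = lam k • φ k)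
    (hne : ∀ k, φ k ⬝ᵥ φ k ≠ 0) (n : ℕ) :
    A ^ n = ∑ k, (lam k ^ n / (φ k ⬝ᵥ φ k)) • vecMulVec (φ k) (φ k) := by
  have horth : Pairwise fun k l => φ k ⬝ᵥ φ l = 0 := fun k l hkl =>
    dotProduct_eq_zero_of_mulVec_eq_smul hA (heig k) (heig l) (hlam.ne hkl)
  calc A ^ n = A ^ n * ∑ k, (φ k ⬝ᵥ φ k)⁻¹ • vecMulVec (φ k) (φ k) := by
        rw [sum_inv_smul_vecMulVec_eq_one horth hne, mul_one]
    _ = ∑ k, (lam k ^ n / (φ k ⬝ᵥ φ k)) • vecMulVec (φ k) (φ k) := by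
        simp only [Matrix.mul_sum, Matrix.mul_smul, mul_vecMulVec,
          pow_mulVec_of_mulVec_eq_smul (heig _), smul_vecMulVec, smul_smul, div_eq_inv_mul]

lemma pow_apply_self_eq_sum_pow_div [LinearOrder K] [IsStrictOrderedRing K] {A : Matrix ι ι K}
    (hA : A.IsSymm) {lam : ι → K} {φ : ι → ι → K} {z : ι} (hlam : Function.Injective lam)
    (heig : ∀ k, A *ᵥ φ k = lam k • φ k) (hφ : ∀ k, φ k z = 1) (n : ℕ) :
    (A ^ n) z z = ∑ k, lam k ^ n / (φ k ⬝ᵥ φ k) := by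
  have hne (k : ι) : φ k ⬝ᵥ φ k ≠ 0 := fun h => by
    simpa [dotProduct_self_eq_zero.mp h] using hφ k
  simp only [pow_eq_sum_smul_vecMulVec hA hlam heig hne n, Matrix.sum_apply, Matrix.smul_apply,
    vecMulVec_apply, hφ, smul_eq_mul, mul_one]

lemma sq_apply_self_of_isSymm [CommSemiring R] {A : Matrix ι ι R} (hA : A.IsSymm) (i : ι) :
    (A ^ 2) i i = ∑ j, A i j ^ 2 := by
  simp only [pow_two, mul_apply, hA.apply]

end SpectralDecomposition

namespace IsJacobi

variable {N : ℕ} {A : Matrix (Fin N) (Fin N) ℝ}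

lemma isSymm (hA : IsJacobi A) : A.IsSymm :=
  IsSymm.ext fun i j => hA.1 j i

lemma sum_sq_row_zero (hA : IsJacobi A) (hN : 1 < N) :
    ∑ j, A ⟨0, Nat.zero_lt_of_lt hN⟩ j ^ 2 =
      A ⟨0, Nat.zero_lt_of_lt hN⟩ ⟨0, Nat.zero_lt_of_lt hN⟩ ^ 2 +
        A ⟨0, Nat.zero_lt_of_lt hN⟩ ⟨1, hN⟩ ^ 2 := by
  obtain ⟨M, rfl⟩ := Nat.exists_eq_add_of_le' hN
  have htail (j : Fin M) : A 0 j.succ.succ = 0 := hA.2.1 _ _ (by simp)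
  simp [Fin.sum_univ_succ, htail]

end IsJacobi

section Response

/-- The cosine-type solution of `y'' = -λ y`, with `C 0 λ = 1` and `C' 0 λ = 0`; it is the time
derivative of `S`. -/
noncomputable def C (t lam : ℝ) : ℝ :=
  if 0 < lam then cos (√lam * t)
  else if lam < 0 then cosh (√(-lam) * t)
  else 1

lemma hasDerivAt_S (t lam : ℝ) : HasDerivAt (S · lam) (C t lam) t := by
  unfold S C
  split_ifs with hpos hneg
  · have hsqrt : √lam ≠ 0 := (sqrt_pos.2 hpos).ne'
    simpa [hsqrt] using (((hasDerivAt_id t).const_mul √lam).sin).div_const √lam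
  · have hsqrt : √(-lam) ≠ 0 := (sqrt_pos.2 (neg_pos.2 hneg)).ne'
    simpa [hsqrt] using (((hasDerivAt_id t).const_mul √(-lam)).sinh).div_const √(-lam)
  · exact hasDerivAt_id t

lemma hasDerivAt_C (t lam : ℝ) : HasDerivAt (C · lam) (-lam * S t lam) t := by
  unfold S C
  split_ifs with hpos hneg
  · convert ((hasDerivAt_id' t).const_mul √lam).cos using 1
    have hsqrt : √lam ≠ 0 := (sqrt_pos.2 hpos).ne'
    field_simp
    rw [sq_sqrt hpos.le]
  · convert ((hasDerivAt_id' t).const_mul √(-lam)).cosh using 1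
    have hsqrt : √(-lam) ≠ 0 := (sqrt_pos.2 (neg_pos.2 hneg)).ne'
    field_simp
    rw [sq_sqrt (neg_pos.2 hneg).le, neg_mul]
  · obtain rfl : lam = 0 := le_antisymm (not_lt.1 hpos) (not_lt.1 hneg)
    simpa using hasDerivAt_const t (1 : ℝ)

lemma S_zero_left (lam : ℝ) : S 0 lam = 0 := by
  simp [S]

lemma C_zero_left (lam : ℝ) : C 0 lam = 1 := by
  simp [C]

lemma analyticOnNhd_S (lam : ℝ) : AnalyticOnNhd ℝ (S · lam) Set.univ := fun t _ => by
  unfold S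
  split_ifs
  · exact (analyticAt_sin.fun_comp (by fun_prop)).div_const
  · exact (analyticAt_sinh.fun_comp (by fun_prop)).div_const
  · exact analyticAt_id

lemma iteratedDeriv_two_mul_S (lam : ℝ) (n : ℕ) :
    iteratedDeriv (2 * n) (S · lam) = fun t => (-lam) ^ n * S t lam := by
  induction n with
  | zero => simp
  | succ n ih =>
    have hderiv : deriv (fun t => (-lam) ^ n * S t lam) = fun t => (-lam) ^ n * C t lam :=
      funext fun t => ((hasDerivAt_S t lam).const_mul _).deriv
    have hderiv' : deriv (fun t => (-lam) ^ n * C t lam) =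
        fun t => (-lam) ^ n * (-lam * S t lam) :=
      funext fun t => ((hasDerivAt_C t lam).const_mul _).deriv
    simp only [Nat.mul_succ, iteratedDeriv_succ, ih, hderiv, hderiv', pow_succ, mul_assoc]

lemma iteratedDeriv_two_mul_S_zero (lam : ℝ) (n : ℕ) :
    iteratedDeriv (2 * n) (S · lam) 0 = 0 := by
  simp only [iteratedDeriv_two_mul_S, S_zero_left, mul_zero]

lemma iteratedDeriv_two_mul_add_one_S_zero (lam : ℝ) (n : ℕ) :
    iteratedDeriv (2 * n + 1) (S · lam) 0 = (-lam) ^ n := by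
  rw [iteratedDeriv_succ, iteratedDeriv_two_mul_S, ((hasDerivAt_S 0 lam).const_mul _).deriv,
    C_zero_left, mul_one]

variable {ι : Type*} [Fintype ι]

/-- The response function `∑ k, c k * S(t, λ_k)` of the discrete spectral measure with mass `c k`
at `lam k`; for a Jacobi matrix `c k = 1 / ρ k`. -/
noncomputable def response (c lam : ι → ℝ) (t : ℝ) : ℝ :=
  ∑ k, c k * S t (lam k)

lemma analyticOnNhd_response (c lam : ι → ℝ) : AnalyticOnNhd ℝ (response c lam) Set.univ :=
  Finset.analyticOnNhd_fun_sum _ fun k _ => analyticOnNhd_const.mul (analyticOnNhd_S (lam k))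

lemma iteratedDeriv_response (c lam : ι → ℝ) (n : ℕ) (t : ℝ) :
    iteratedDeriv n (response c lam) t = ∑ k, c k * iteratedDeriv n (S · (lam k)) t := by
  have hsmooth (k : ι) : ContDiff ℝ n (fun t => c k * S t (lam k)) :=
    contDiff_const.mul (analyticOnNhd_S (lam k)).contDiff
  unfold response
  simp only [iteratedDeriv_fun_sum fun k _ => (hsmooth k).contDiffAt,
    iteratedDeriv_const_mul_field]

lemma iteratedDeriv_two_mul_response_zero (c lam : ι → ℝ) (n : ℕ) :
    iteratedDeriv (2 * n) (response c lam) 0 = 0 := by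
  simp only [iteratedDeriv_response, iteratedDeriv_two_mul_S_zero, mul_zero,
    Finset.sum_const_zero]

lemma iteratedDeriv_two_mul_add_one_response_zero (c lam : ι → ℝ) (n : ℕ) :
    iteratedDeriv (2 * n + 1) (response c lam) 0 = (-1) ^ n * ∑ k, c k * lam k ^ n := by
  simp only [iteratedDeriv_response, iteratedDeriv_two_mul_add_one_S_zero, Finset.mul_sum]
  exact Finset.sum_congr rfl fun k _ => by rw [neg_pow, mul_left_comm]

end Response

theorem stmt4_general {ι : Type*} [Fintype ι] [DecidableEq ι] {A : Matrix ι ι ℝ} (hA : A.IsSymm)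
    {lam : ι → ℝ} {φ : ι → ι → ℝ} {ρ : ι → ℝ} {z : ι} (hlam : Function.Injective lam)
    (heig : ∀ k, A *ᵥ φ k = lam k • φ k) (hφ : ∀ k, φ k z = 1)
    (hρ : ∀ k, ρ k = φ k ⬝ᵥ φ k)
    {r : ℝ → ℝ} (hr : r = response (fun k => 1 / ρ k) lam) :
    (∀ n : ℕ, (A ^ n) z z = ∑ k, lam k ^ n / ρ k) ∧
    AnalyticOnNhd ℝ r Set.univ ∧
    (∀ n : ℕ, iteratedDeriv (2 * n) r 0 = 0) ∧
    (∀ n : ℕ, iteratedDeriv (2 * n + 1) r 0 = (-1 : ℝ) ^ n * (A ^ n) z z) ∧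
    iteratedDeriv 1 r 0 = 1 ∧
    iteratedDeriv 3 r 0 = -A z z ∧
    iteratedDeriv 5 r 0 = ∑ j, A z j ^ 2 := by
  have hmoment (n : ℕ) : (A ^ n) z z = ∑ k, lam k ^ n / ρ k := by
    simpa only [hρ] using pow_apply_self_eq_sum_pow_div hA hlam heig hφ n
  have hodd (n : ℕ) : iteratedDeriv (2 * n + 1) r 0 = (-1 : ℝ) ^ n * (A ^ n) z z := by
    simp only [hr, iteratedDeriv_two_mul_add_one_response_zero, hmoment, one_div_mul_eq_div]
  refine ⟨hmoment, hr ▸ analyticOnNhd_response _ _, fun n => ?_, hodd, ?_, ?_, ?_⟩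
  · rw [hr, iteratedDeriv_two_mul_response_zero]
  · simpa using hodd 0
  · simpa using hodd 1
  · simpa [sq_apply_self_of_isSymm hA] using hodd 2

/-- moments of the spectral measure, analyticity of the response
function `r`, and the trace-type formulas for its derivatives at `0`. -/
theorem stmt4 {N : ℕ} (hN : 2 ≤ N) (A : Matrix (Fin N) (Fin N) ℝ) (hA : IsJacobi A)
    (lam : Fin N → ℝ) (φ : Fin N → Fin N → ℝ) (ρ : Fin N → ℝ)
    (hlam : StrictMono lam)
    (heig : ∀ k, A.mulVec (φ k) = lam k • φ k)
    (hφ1 : ∀ k, φ k ⟨0, by omega⟩ = 1)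
    (hρ : ∀ k, ρ k = ∑ i, φ k i * φ k i)
    (r : ℝ → ℝ) (hr : r = fun t => ∑ k, (1 / ρ k) * S t (lam k)) :
    (∀ n : ℕ, (A ^ n) ⟨0, by omega⟩ ⟨0, by omega⟩ = ∑ k, lam k ^ n / ρ k) ∧
    AnalyticOnNhd ℝ r Set.univ ∧
    (∀ n : ℕ, iteratedDeriv (2 * n) r 0 = 0) ∧
    (∀ n : ℕ, iteratedDeriv (2 * n + 1) r 0 =
      (-1 : ℝ) ^ n * (A ^ n) ⟨0, by omega⟩ ⟨0, by omega⟩) ∧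
    iteratedDeriv 1 r 0 = 1 ∧
    iteratedDeriv 3 r 0 = -A ⟨0, by omega⟩ ⟨0, by omega⟩ ∧
    iteratedDeriv 5 r 0 =
      A ⟨0, by omega⟩ ⟨0, by omega⟩ ^ 2 + A ⟨0, by omega⟩ ⟨1, by omega⟩ ^ 2 := by
  simpa only [hA.sum_sq_row_zero hN] using
    stmt4_general hA.isSymm hlam.injective heig hφ1 hρ hr
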